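/- arXiv:1810.05498 — 4 statements merged into one kernel-verified Lean document; each statement's English description precedes it below -/
import Mathlib

section
/- Let E be a lattice effect algebra and define x·y := ((x'∧y)⊕y')' for all x,y ∈ E. Then for all a, b ∈ E: a∧b = (a'·b)'·b. -/
/-- An effect algebra: a partial algebra (E;⊕,',0,1). The partial operation ⊕ is
modeled by a definedness predicate `D` together with a total function `add` whose
value is only meaningful on defined pairs. -/
structure EffectAlgebra (E : Type*) where
  /-- definedness of `x ⊕ y` -/
  D : E → E → Prop
  /-- the value of `x ⊕ y` (meaningful only when `D x y`) -/
  add : E → E → E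
  zero : E
  one : E
  /-- the complement `x'` -/
  compl : E → E
  /-- (E1) commutativity -/
  E1 : ∀ x y, D x y → D y x ∧ add x y = add y x
  /-- (E2) associativity -/
  E2 : ∀ x y z, D x y → D (add x y) z →
    D y z ∧ D x (add y z) ∧ add (add x y) z = add x (add y z)
  /-- (E3) existence of the complement -/
  E3a : ∀ x, D x (compl x)
  E3b : ∀ x, add x (compl x) = one
  /-- (E3) uniqueness of the complement -/
  E3c : ∀ x y, D x y → add x y = one → y = compl x
  /-- (E4) -/
  E4 : ∀ x, D x one → x = zero

/-- The induced order of an effect algebra: `a ≤ b` iff `a ⊕ c = b` for some `c`. -/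
def EffectAlgebra.le {E : Type*} (A : EffectAlgebra E) (a b : E) : Prop :=
  ∃ c, A.D a c ∧ A.add a c = b

/-- A lattice effect algebra: an effect algebra whose induced order is a lattice,
with meet `inf` and join `sup`. -/
structure LatticeEffectAlgebra (E : Type*) extends EffectAlgebra E where
  inf : E → E → E
  sup : E → E → E
  inf_le_left : ∀ a b, toEffectAlgebra.le (inf a b) a
  inf_le_right : ∀ a b, toEffectAlgebra.le (inf a b) b
  le_inf : ∀ a b c, toEffectAlgebra.le c a → toEffectAlgebra.le c b →
    toEffectAlgebra.le c (inf a b)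
  le_sup_left : ∀ a b, toEffectAlgebra.le a (sup a b)
  le_sup_right : ∀ a b, toEffectAlgebra.le b (sup a b)
  sup_le : ∀ a b c, toEffectAlgebra.le a c → toEffectAlgebra.le b c →
    toEffectAlgebra.le (sup a b) c

/-- The total operation `x·y := ((x'∧y)⊕y')'` on a lattice effect algebra
(well defined since `x'∧y ≤ y`). -/
def LatticeEffectAlgebra.prod {E : Type*} (A : LatticeEffectAlgebra E) (x y : E) : E :=
  A.compl (A.add (A.inf (A.compl x) y) (A.compl y))

/-!
Write `y ⊖ x` for the unique `c` with `x ⊕ c = y`, where `x ≤ y`. Associativity gives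
`y ⊖ x = (x ⊕ y')'`, so `x · y = y ⊖ (x' ∧ y)`. Hence `a' · b = b ⊖ (a ∧ b)`, and since this
element lies below `b`, meeting it with `b` changes nothing and
`(a' · b)' · b = b ⊖ (b ⊖ (a ∧ b)) = a ∧ b`.
-/

namespace EffectAlgebra

variable {E : Type*} (A : EffectAlgebra E) {x y z : E}

theorem D_symm (h : A.D x y) : A.D y x :=
  (A.E1 x y h).1

protected theorem add_comm (h : A.D x y) : A.add x y = A.add y x :=
  (A.E1 x y h).2

theorem D_compl_self (x : E) : A.D (A.compl x) x :=
  A.D_symm (A.E3a x)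

theorem compl_add_self (x : E) : A.add (A.compl x) x = A.one :=
  (A.add_comm (A.D_compl_self x)).trans (A.E3b x)

protected theorem compl_compl (x : E) : A.compl (A.compl x) = x :=
  (A.E3c _ _ (A.D_compl_self x) (A.compl_add_self x)).symm

/-- The difference `y ⊖ x` of an effect algebra, the element `c` with `x ⊕ c = y`. It is encoded
by the total expression `(x ⊕ y')'`, which is meaningful only when `x ≤ y`. -/
def diff (y x : E) : E :=
  A.compl (A.add x (A.compl y))

theorem add_diff_cancel_left (h : A.D x y) : A.diff (A.add x y) x = y := by
  obtain ⟨-, hD, hassoc⟩ := A.E2 y x (A.compl (A.add y x)) (A.D_symm h) (A.E3a _)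
  have hcompl : A.add x (A.compl (A.add y x)) = A.compl y :=
    A.E3c _ _ hD (hassoc.symm.trans (A.E3b _))
  rw [diff, A.add_comm h, hcompl, A.compl_compl]

protected theorem add_left_cancel (hy : A.D x y) (hz : A.D x z)
    (h : A.add x y = A.add x z) : y = z := by
  rw [← A.add_diff_cancel_left hy, h, A.add_diff_cancel_left hz]

theorem diff_le (h : A.le x y) : A.le (A.diff y x) y := by
  obtain ⟨c, hc, rfl⟩ := h
  rw [A.add_diff_cancel_left hc]
  exact ⟨x, A.D_symm hc, (A.add_comm hc).symm⟩

theorem diff_diff_cancel (h : A.le x y) : A.diff y (A.diff y x) = x := by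
  obtain ⟨c, hc, rfl⟩ := h
  rw [A.add_diff_cancel_left hc, A.add_comm hc, A.add_diff_cancel_left (A.D_symm hc)]

theorem compl_one : A.compl A.one = A.zero :=
  A.E4 _ (A.D_compl_self A.one)

theorem D_one_zero : A.D A.one A.zero :=
  A.compl_one ▸ A.E3a A.one

theorem one_add_zero : A.add A.one A.zero = A.one :=
  A.compl_one ▸ A.E3b A.one

theorem D_zero (x : E) : A.D x A.zero :=
  (A.E2 (A.compl x) x A.zero (A.D_compl_self x) (A.compl_add_self x ▸ A.D_one_zero)).1

protected theorem add_zero (x : E) : A.add x A.zero = x := by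
  obtain ⟨-, hD, hassoc⟩ :=
    A.E2 (A.compl x) x A.zero (A.D_compl_self x) (A.compl_add_self x ▸ A.D_one_zero)
  refine A.add_left_cancel hD (A.D_compl_self x) ?_
  rw [← hassoc, A.compl_add_self, A.one_add_zero]

theorem eq_zero_of_add_eq_zero (hD : A.D x y) (h : A.add x y = A.zero) : y = A.zero :=
  A.E4 y (A.E2 x y A.one hD (h ▸ A.D_symm A.D_one_zero)).1

protected theorem le_refl (x : E) : A.le x x :=
  ⟨A.zero, A.D_zero x, A.add_zero x⟩

protected theorem le_antisymm (hxy : A.le x y) (hyx : A.le y x) : x = y := by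
  obtain ⟨u, hu, rfl⟩ := hxy
  obtain ⟨v, hv, hx⟩ := hyx
  obtain ⟨huv, hxuv, hassoc⟩ := A.E2 x u v hu hv
  have huv_zero : A.add u v = A.zero :=
    A.add_left_cancel hxuv (A.D_zero x) (by rw [← hassoc, hx, A.add_zero])
  rw [A.eq_zero_of_add_eq_zero huv huv_zero, A.add_zero] at hx
  exact hx.symm

end EffectAlgebra

namespace LatticeEffectAlgebra

variable {E : Type*} (A : LatticeEffectAlgebra E) {x y : E}

protected theorem inf_eq_left (h : A.le x y) : A.inf x y = x :=
  A.le_antisymm (A.inf_le_left x y) (A.le_inf x y x (A.le_refl x) h)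

theorem prod_compl_left (x y : E) : A.prod (A.compl x) y = A.diff y (A.inf x y) := by
  rw [prod, A.compl_compl, EffectAlgebra.diff]

end LatticeEffectAlgebra

/-- In a lattice effect algebra with `x·y := ((x'∧y)⊕y')'`, one has
`a∧b = (a'·b)'·b`. -/
theorem inf_eq_prod {E : Type*} (A : LatticeEffectAlgebra E) (a b : E) :
    A.inf a b = A.prod (A.compl (A.prod (A.compl a) b)) b := by
  have hle : A.le (A.inf a b) b := A.inf_le_right a b
  calc
    A.inf a b = A.diff b (A.diff b (A.inf a b)) := (A.diff_diff_cancel hle).symm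
    _ = A.diff b (A.inf (A.diff b (A.inf a b)) b) := by rw [A.inf_eq_left (A.diff_le hle)]
    _ = A.prod (A.compl (A.prod (A.compl a) b)) b := by rw [A.prod_compl_left, A.prod_compl_left]
end

section
/- Let R = (R;·,',0,1) be an effect groupoid and let a, b ∈ R. If a·b = 0 and (a'·b')' = 1, then b = a'. Moreover, for every a ∈ R: a·a' = 0 and (a'·a'')' = 1, i.e., a⊕a' exists and equals 1 (so a' is the unique complement of a with respect to the partial operation x⊕y := (x'·y')' defined when x·y = 0). -/
/-- An effect groupoid: an algebra (R;·,',0,1) of type (2,1,0,0) satisfying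
(NG0)–(NG8). -/
structure EffectGroupoid (R : Type*) where
  mul : R → R → R
  compl : R → R
  zero : R
  one : R
  /-- (NG0) -/
  ng0l : ∀ x, mul one x = x
  ng0r : ∀ x, mul x one = x
  /-- (NG1) -/
  ng1 : ∀ x, compl (compl x) = x
  /-- (NG2) -/
  ng2l : ∀ x, mul zero x = zero
  ng2r : ∀ x, mul x zero = zero
  /-- (NG3) -/
  ng3 : compl zero = one
  /-- (NG4) -/
  ng4l : ∀ x y, mul x (mul y (compl x)) = zero
  ng4r : ∀ x y, mul (mul y (compl x)) x = zero
  /-- (NG5) -/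
  ng5 : ∀ x y, mul x y =
    mul y (compl (mul (compl (mul (compl y) (compl x))) (compl x)))
  /-- (NG6) -/
  ng6a : ∀ x y, mul x (compl (mul (compl y) x)) = mul (compl (mul (compl y) x)) x
  ng6b : ∀ x y, mul (compl (mul (compl y) x)) x = mul (compl (mul (compl x) y)) y
  /-- (NG7) -/
  ng7 : ∀ x y z,
    mul (compl (mul (compl (mul x (compl y))) (compl y))) z =
    compl (mul (compl (mul (mul x z) (compl (mul y z)))) (compl (mul y z)))
  /-- (NG8) -/
  ng8 : ∀ x y z, mul (compl x) (compl y) = zero →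
    mul (compl (mul x y)) (compl z) = zero →
    mul (compl y) (compl z) = zero ∧
    mul (compl x) (compl (mul y z)) = zero ∧
    mul (mul x y) z = mul x (mul y z)

/-! The relation `x ≤ y`, meaning `x·y' = 0`, is antisymmetric. Since `x·y = 0` is symmetric in
`x` and `y`, the hypothesis `a·b = 0` says `b ≤ a'`, while `a⊕b = 1` says `a'·b' = 0`, that is
`a' ≤ b`. -/

namespace EffectGroupoid

variable {R : Type*} (G : EffectGroupoid R) {x y : R}

theorem compl_eq_one_iff : G.compl x = G.one ↔ x = G.zero := by
  have compl_injective : Function.Injective G.compl := Function.Involutive.injective G.ng1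
  rw [← G.ng3, compl_injective.eq_iff]

theorem mul_compl_self (x : R) : G.mul x (G.compl x) = G.zero := by
  simpa only [G.ng0l] using G.ng4l x G.one

theorem mul_eq_zero_symm (h : G.mul x y = G.zero) : G.mul y x = G.zero := by
  have hy : y = G.mul (G.compl (G.mul (G.compl y) (G.compl x))) (G.compl x) := by
    simpa only [G.ng1, h, G.ng3, G.ng0l] using G.ng6b y (G.compl x)
  rw [hy]
  exact G.ng4r x _

theorem eq_of_mul_compl_eq_zero (hxy : G.mul x (G.compl y) = G.zero)
    (hyx : G.mul y (G.compl x) = G.zero) : x = y := by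
  simpa only [G.mul_eq_zero_symm hxy, G.mul_eq_zero_symm hyx, G.ng3, G.ng0l] using G.ng6b x y

end EffectGroupoid

/-- In an effect groupoid: if `a·b = 0` and `(a'·b')' = 1` then `b = a'`; moreover
`a·a' = 0` and `(a'·a'')' = 1`, i.e. `a⊕a'` exists and equals `1`. -/
theorem compl_unique_and_exists {R : Type*} (G : EffectGroupoid R) (a b : R) :
    (G.mul a b = G.zero → G.compl (G.mul (G.compl a) (G.compl b)) = G.one → b = G.compl a) ∧
    G.mul a (G.compl a) = G.zero ∧
    G.compl (G.mul (G.compl a) (G.compl (G.compl a))) = G.one := by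
  refine ⟨fun hab hone => ?_, G.mul_compl_self a, G.compl_eq_one_iff.2 (G.mul_compl_self _)⟩
  have b_le_compl_a : G.mul b (G.compl (G.compl a)) = G.zero := by
    rw [G.ng1]
    exact G.mul_eq_zero_symm hab
  have compl_a_le_b : G.mul (G.compl a) (G.compl b) = G.zero := G.compl_eq_one_iff.1 hone
  exact G.eq_of_mul_compl_eq_zero b_le_compl_a compl_a_le_b
end

section
/- Let R = (R;·,',0,1) be an effect groupoid. Let 𝔼(R) = (R;⊕,',0,1) be the lattice effect algebra with x⊕y := (x'·y')' defined whenever x·y = 0, with lattice meet ∧, and let ℝ(𝔼(R)) = (R;·₁,',0,1) be the effect groupoid with x·₁y := ((x'∧y)⊕y')'. Then ℝ(𝔼(R)) = R: for all a, b ∈ R, a·₁b = a·b. -/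
/-! Unfolding the definitions and cancelling double complements turns `a ·₁ b` into
`((a·b)'·b)'·b`, which is the meet of `a·b` and `b`; this meet is `a·b` since `a·b ≤ b`. -/

namespace EffectGroupoid

variable {R : Type*} (G : EffectGroupoid R)

/-- The meet `x ∧ y = (x'·y)'·y` of the lattice effect algebra `𝔼(R)`. -/
def inf (x y : R) : R :=
  G.mul (G.compl (G.mul (G.compl x) y)) y

/-- The partial sum `x ⊕ y = (x'·y')'` of the lattice effect algebra `𝔼(R)`. Partiality is
encoded by `Part`, with domain condition `x·y = 0`. -/
def oplus (x y : R) : Part R where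
  Dom := G.mul x y = G.zero
  get _ := G.compl (G.mul (G.compl x) (G.compl y))

theorem mul_mul_compl (x y : R) : G.mul (G.mul x y) (G.compl y) = G.zero := by
  simpa only [G.ng1] using G.ng4r (G.compl y) x

theorem compl_mul_mul (x y : R) : G.mul (G.compl y) (G.mul x y) = G.zero := by
  simpa only [G.ng1] using G.ng4l (G.compl y) x

theorem inf_comm (x y : R) : G.inf x y = G.inf y x :=
  G.ng6b y x

theorem inf_eq_left_of_compl_mul_eq_zero {x y : R} (h : G.mul (G.compl y) x = G.zero) :
    G.inf x y = x := by
  rw [inf_comm, inf, h, G.ng3, G.ng0l]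

theorem oplus_inf_compl_dom (x y : R) : (G.oplus (G.inf x y) (G.compl y)).Dom :=
  G.mul_mul_compl _ y

/-- The product `x ·₁ y = ((x' ∧ y) ⊕ y')'` of the effect groupoid `ℝ(𝔼(R))`. It is total because
`x' ∧ y ≤ y`. -/
def roundTripMul (x y : R) : R :=
  G.compl ((G.oplus (G.inf (G.compl x) y) (G.compl y)).get (G.oplus_inf_compl_dom _ y))

theorem roundTripMul_eq_inf (x y : R) : G.roundTripMul x y = G.inf (G.mul x y) y := by
  simp only [roundTripMul, oplus, inf, G.ng1]

end EffectGroupoid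

/-- `ℝ(𝔼(R)) = R`: for an effect groupoid `R`, with `x⊕y := (x'·y')'` (defined when
`x·y = 0`) and meet `u∧v = (u'·v)'·v` in `𝔼(R)`, the operation
`a·₁b := ((a'∧b)⊕b')'` coincides with `a·b`. -/
theorem round_trip_effect_groupoid {R : Type*} (G : EffectGroupoid R) (a b : R) :
    G.compl (G.compl (G.mul
      (G.compl (G.mul (G.compl (G.mul (G.compl (G.compl a)) b)) b))
      (G.compl (G.compl b)))) = G.mul a b := by
  change G.roundTripMul a b = G.mul a b
  calc
    G.roundTripMul a b = G.inf (G.mul a b) b := G.roundTripMul_eq_inf a b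
    _ = G.mul a b := G.inf_eq_left_of_compl_mul_eq_zero (G.compl_mul_mul a b)
end

section
/- (Soundness) The groupoid-based logic L_LEA for lattice effect algebras is sound for the class of effect groupoids: for every sequent φ ⊢ ψ derivable in L_LEA, every effect groupoid R = (R;·,',0,1), and every valuation v from propositional variables to R, the interpretations ⟦φ⟧ᵥ and ⟦ψ⟧ᵥ (obtained by interpreting the connective · as the groupoid operation ·, ¬ as ', ⊥ as 0 and ⊤ as 1) satisfy ⟦φ⟧ᵥ ≤ ⟦ψ⟧ᵥ, where a ≤ b means a·b' = 0 (the induced order of the corresponding lattice effect algebra 𝔼(R)). -/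
/-- Formulas of the groupoid-based logic L_LEA over propositional variables `V`. -/
inductive Fml (V : Type*) : Type _ where
  | var : V → Fml V
  | mul : Fml V → Fml V → Fml V
  | neg : Fml V → Fml V
  | bot : Fml V
  | top : Fml V

/-- The abbreviation χ(φ,ψ) := ¬(¬(φ·¬ψ)·¬ψ) used in the rule (mds). -/
def Fml.chi {V : Type*} (φ ψ : Fml V) : Fml V :=
  .neg (.mul (.neg (.mul φ (.neg ψ))) (.neg ψ))

/-- Derivable sequents `φ ⊢ ψ` of the sequent calculus L_LEA. -/
inductive Der {V : Type*} : Fml V → Fml V → Prop where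
  | negr  : ∀ φ ψ, Der φ (.neg ψ) → Der ψ (.neg φ)
  | dn1   : ∀ φ, Der (.neg (.neg φ)) φ
  | dn2   : ∀ φ, Der φ (.neg (.neg φ))
  | itm1  : ∀ φ ψ μ, Der φ ψ → Der ψ φ → Der (.mul φ μ) (.mul ψ μ)
  | itm2  : ∀ φ ψ μ, Der φ ψ → Der ψ φ → Der (.mul μ φ) (.mul μ ψ)
  | mbot  : ∀ φ ψ, Der (.mul φ (.neg ψ)) .bot → Der φ ψ
  | botm  : ∀ φ ψ, Der φ ψ → Der (.mul φ (.neg ψ)) .bot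
  | onel1 : ∀ φ, Der (.mul .top φ) φ
  | onel2 : ∀ φ, Der φ (.mul .top φ)
  | oner1 : ∀ φ, Der (.mul φ .top) φ
  | oner2 : ∀ φ, Der φ (.mul φ .top)
  | zerol1 : ∀ φ, Der (.mul .bot φ) .bot
  | zerol2 : ∀ φ, Der .bot (.mul .bot φ)
  | zeror1 : ∀ φ, Der (.mul φ .bot) .bot
  | zeror2 : ∀ φ, Der .bot (.mul φ .bot)
  | ol1  : ∀ φ ψ, Der .bot (.mul φ (.mul ψ (.neg φ)))
  | ol2  : ∀ φ ψ, Der (.mul φ (.mul ψ (.neg φ))) .bot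
  | or1  : ∀ φ ψ, Der .bot (.mul (.mul ψ (.neg φ)) φ)
  | or2  : ∀ φ ψ, Der (.mul (.mul ψ (.neg φ)) φ) .bot
  | cm1  : ∀ φ ψ, Der (.mul φ (.neg (.mul (.neg ψ) φ))) (.mul (.neg (.mul (.neg ψ) φ)) φ)
  | cm2  : ∀ φ ψ, Der (.mul (.neg (.mul (.neg ψ) φ)) φ) (.mul φ (.neg (.mul (.neg ψ) φ)))
  | mc1  : ∀ φ ψ, Der (.mul (.neg (.mul (.neg ψ) φ)) φ) (.mul (.neg (.mul (.neg φ) ψ)) ψ)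
  | mc2  : ∀ φ ψ, Der (.mul (.neg (.mul (.neg φ) ψ)) ψ) (.mul (.neg (.mul (.neg ψ) φ)) φ)
  | ocm1 : ∀ φ ψ, Der (.mul φ ψ) (.mul ψ (.neg (.mul (.neg (.mul (.neg ψ) (.neg φ))) (.neg φ))))
  | ocm2 : ∀ φ ψ, Der (.mul ψ (.neg (.mul (.neg (.mul (.neg ψ) (.neg φ))) (.neg φ)))) (.mul φ ψ)
  | mds1 : ∀ φ ψ μ, Der (.mul (Fml.chi φ ψ) μ) (Fml.chi (.mul φ μ) (.mul ψ μ))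
  | mds2 : ∀ φ ψ μ, Der (Fml.chi (.mul φ μ) (.mul ψ μ)) (.mul (Fml.chi φ ψ) μ)
  | cut  : ∀ φ ψ χ, Der φ ψ → Der ψ χ → Der φ χ
  | ass1 : ∀ φ ψ μ, Der (.neg φ) ψ → Der (.neg (.mul φ ψ)) μ → Der (.neg ψ) μ
  | ass2 : ∀ φ ψ μ, Der (.neg φ) ψ → Der (.neg (.mul φ ψ)) μ → Der (.neg φ) (.mul ψ μ)
  | ass3a : ∀ φ ψ μ, Der (.neg φ) ψ → Der (.neg (.mul φ ψ)) μ →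
      Der (.mul (.mul φ ψ) μ) (.mul φ (.mul ψ μ))
  | ass3b : ∀ φ ψ μ, Der (.neg φ) ψ → Der (.neg (.mul φ ψ)) μ →
      Der (.mul φ (.mul ψ μ)) (.mul (.mul φ ψ) μ)

/-- Interpretation of a formula in an effect groupoid under a valuation `v`. -/
def interp {V R : Type*} (G : EffectGroupoid R) (v : V → R) : Fml V → R
  | .var p => v p
  | .mul φ ψ => G.mul (interp G v φ) (interp G v ψ)
  | .neg φ => G.compl (interp G v φ)
  | .bot => G.zero
  | .top => G.one

/-!
The relation `x · y' = 0` is a partial order for which `'` is antitone. The key fact is a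
factorisation extracted from (NG6): if `x ≤ y`, then `y' = (y · x')' · x'`. With (NG4) it yields
the symmetry of `x · y = 0`, and substituting it in the associativity axiom (NG8) gives
transitivity, that is, the soundness of the cut rule. By antisymmetry, interderivable formulas have
equal interpretations, which is what makes the replacement rules (itm1) and (itm2) sound.
-/

namespace EffectGroupoid

variable {R : Type*} {G : EffectGroupoid R} {x y z : R}

/-- The induced order `x ≤ y` of the lattice effect algebra `𝔼(R)`, encoded as `x · y' = 0`. -/
def Le (G : EffectGroupoid R) (x y : R) : Prop :=
  G.mul x (G.compl y) = G.zero

theorem le_refl (x : R) : G.Le x x := by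
  simpa only [Le, G.ng0l] using G.ng4l x G.one

theorem Le.of_eq (h : x = y) : G.Le x y :=
  h ▸ le_refl x

theorem le_zero_iff : G.Le x G.zero ↔ x = G.zero := by
  rw [Le, G.ng3, G.ng0r]

theorem compl_injective : Function.Injective G.compl :=
  Function.Involutive.injective G.ng1

theorem Le.compl_mul_compl_eq (h : G.Le x y) :
    G.mul (G.compl (G.mul y (G.compl x))) (G.compl x) = G.compl y := by
  have hmul : G.mul x (G.compl y) = G.zero := h
  simpa only [G.ng1, hmul, G.ng3, G.ng0l] using (G.ng6b (G.compl y) (G.compl x)).symm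

theorem Le.compl_mul_eq_zero (h : G.Le x y) : G.mul (G.compl y) x = G.zero := by
  rw [← h.compl_mul_compl_eq]
  exact G.ng4r x _

theorem le_compl_of_le_compl (h : G.Le x (G.compl y)) : G.Le y (G.compl x) := by
  simpa only [Le, G.ng1] using h.compl_mul_eq_zero

theorem Le.antisymm (hxy : G.Le x y) (hyx : G.Le y x) : x = y := by
  have hmul : G.mul y (G.compl x) = G.zero := hyx
  apply G.compl_injective
  simpa only [hmul, G.ng3, G.ng0l] using hxy.compl_mul_compl_eq

theorem Le.trans (hxy : G.Le x y) (hyz : G.Le y z) : G.Le x z := by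
  have hx : G.Le (G.compl (G.compl (G.mul y (G.compl x)))) (G.compl x) := by
    simpa only [Le, G.ng1] using G.ng4r x y
  have hz : G.Le (G.compl (G.mul (G.compl (G.mul y (G.compl x))) (G.compl x))) z := by
    rwa [hxy.compl_mul_compl_eq, G.ng1]
  simpa only [Le, G.ng1] using (G.ng8 _ _ _ hx hz).1

end EffectGroupoid

/-- (Soundness) For every sequent `φ ⊢ ψ` derivable in L_LEA, every effect groupoid
`R` and every valuation `v`, one has `⟦φ⟧ᵥ ≤ ⟦ψ⟧ᵥ`, where `a ≤ b` means `a·b' = 0`. -/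
theorem soundness {V R : Type*} (G : EffectGroupoid R) (v : V → R) (φ ψ : Fml V)
    (h : Der φ ψ) :
    G.mul (interp G v φ) (G.compl (interp G v ψ)) = G.zero := by
  change G.Le (interp G v φ) (interp G v ψ)
  induction h with
  | negr _ _ _ ih => exact EffectGroupoid.le_compl_of_le_compl ih
  | itm1 _ _ μ _ _ ih₁ ih₂ => exact .of_eq (congrArg (G.mul · (interp G v μ)) (ih₁.antisymm ih₂))
  | itm2 _ _ μ _ _ ih₁ ih₂ => exact .of_eq (congrArg (G.mul (interp G v μ)) (ih₁.antisymm ih₂))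
  | mbot _ _ _ ih => exact EffectGroupoid.le_zero_iff.1 ih
  | botm _ _ _ ih => exact EffectGroupoid.le_zero_iff.2 ih
  | cut _ _ _ _ _ ih₁ ih₂ => exact ih₁.trans ih₂
  | ass1 _ _ _ _ _ ih₁ ih₂ => exact (G.ng8 _ _ _ ih₁ ih₂).1
  | ass2 _ _ _ _ _ ih₁ ih₂ => exact (G.ng8 _ _ _ ih₁ ih₂).2.1
  | ass3a _ _ _ _ _ ih₁ ih₂ => exact .of_eq (G.ng8 _ _ _ ih₁ ih₂).2.2
  | ass3b _ _ _ _ _ ih₁ ih₂ => exact .of_eq (G.ng8 _ _ _ ih₁ ih₂).2.2.symm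
  | cm1 => exact .of_eq (G.ng6a _ _)
  | cm2 => exact .of_eq (G.ng6a _ _).symm
  | mc1 | mc2 => exact .of_eq (G.ng6b _ _)
  | ocm1 => exact .of_eq (G.ng5 _ _)
  | ocm2 => exact .of_eq (G.ng5 _ _).symm
  | mds1 => exact .of_eq (G.ng7 _ _ _)
  | mds2 => exact .of_eq (G.ng7 _ _ _).symm
  | dn1 | dn2 | onel1 | onel2 | oner1 | oner2 | zerol1 | zerol2 | zeror1 | zeror2
  | ol1 | ol2 | or1 | or2 =>
    exact .of_eq (by simp only [interp, G.ng0l, G.ng0r, G.ng1, G.ng2l, G.ng2r, G.ng4l, G.ng4r])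
end
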